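/- Let n ≥ 3, p ∈ (0,1), and let X₁,...,Xₙ be i.i.d. Bernoulli(p) random variables. Let D₁(X) = X₁ + X₂ + ... + X_{n-1} and P̂₁(X) = (X₁X₂ + X₂X₃ + ... + X_{n-1}Xₙ)/D₁(X). Then E[P̂₁(X) | D₁(X) ≠ 0] = p/(1 - (1-p)^{n-1}) + (p-1)/(n-1). -/

import Mathlib

/-!
Let `D` be the number of successes among the first `m = n - 1` trials, and restrict all expectations
of quotients by `D` to the event `D ≠ 0`. Each product `Xⱼ Xⱼ₊₁` with `j < m` involves only two of
these `m` exchangeable trials, so `E[Xⱼ Xⱼ₊₁ / D]` is the same as for any other pair of distinct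
trials; summing over all pairs gives
`m (m - 1) E[Xⱼ Xⱼ₊₁ / D] = E[(D² - D) / D] = m p - P(D ≠ 0)`. In the remaining product `Xₘ Xₙ` the
factor `Xₙ` is independent of the first `m` trials, and `m E[Xₘ / D] = E[D / D] = P(D ≠ 0)`. It
remains to sum the two contributions and to divide by `P(D ≠ 0) = 1 - (1 - p)ᵐ`.
-/

/-- Probability weight of a Bernoulli(p) outcome. -/
def bw (p : ℝ) (b : Bool) : ℝ := if b then p else 1 - p

/-- The 0/1 real value of the `j`-th coordinate (0-based) of `x`, or `0` if out of range. -/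
def bval {n : ℕ} (x : Fin n → Bool) (j : ℕ) : ℝ :=
  if h : j < n then (if x ⟨j, h⟩ then 1 else 0) else 0

section Outcomes

variable {ι : Type*}

/-- The random variable `Xᵢ`, with values in `{0, 1}`, on the space of outcomes `ι → Bool`. -/
def hit (i : ι) (x : ι → Bool) : ℝ := if x i then 1 else 0

lemma hit_mul_self (i : ι) : hit i * hit i = hit i := by
  funext x
  simp [hit]

variable [Fintype ι]

/-- The total number of successes `D = ∑ᵢ Xᵢ`. Quotients by `hits` vanish where `hits` does, so that
they carry the restriction to the event `D ≠ 0`; in particular `hits / hits` is its indicator. -/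
def hits : (ι → Bool) → ℝ := ∑ i, hit i

lemma hits_eq_zero_iff {x : ι → Bool} : hits x = 0 ↔ ∀ i, x i = false := by
  rw [hits, Finset.sum_apply, Finset.sum_eq_zero_iff_of_nonneg fun i _ => by
    unfold hit; positivity]
  simp [hit]

lemma hits_div_hits : (hits / hits : (ι → Bool) → ℝ) = 1 - ∏ i, (1 - hit i) := by
  funext x
  by_cases hx : hits x = 0
  · simp [hx, hit, hits_eq_zero_iff.1 hx]
  · obtain ⟨i, hi⟩ : ∃ i, x i = true := by simpa [hits_eq_zero_iff] using hx
    have vanishing_factor : ∏ i, (1 - hit i x) = 0 :=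
      Finset.prod_eq_zero (Finset.mem_univ i) (by simp [hit, hi])
    simp [hx, vanishing_factor]

lemma sum_hit_div_hits : ∑ i : ι, hit i / hits = hits / hits := by
  simp only [div_eq_mul_inv, ← Finset.sum_mul]
  rfl

lemma hits_comp_perm (σ : Equiv.Perm ι) (x : ι → Bool) : hits (x ∘ σ) = hits x := by
  simp only [hits, Finset.sum_apply]
  exact Equiv.sum_comp σ fun i => hit i x

lemma sum_offDiag_hit_mul_hit_div_hits :
    ∑ q ∈ (Finset.univ : Finset ι).offDiag, hit q.1 * hit q.2 / hits = hits - hits / hits := by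
  classical
  have diagonal : ∑ q ∈ (Finset.univ : Finset ι).diag, hit q.1 * hit q.2 / hits = hits / hits := by
    simp only [Finset.sum_diag, hit_mul_self, sum_hit_div_hits]
  have all_pairs : ∑ q : ι × ι, hit q.1 * hit q.2 / hits = hits := by
    simp only [Fintype.sum_prod_type, div_eq_mul_inv, ← Finset.sum_mul, ← Finset.mul_sum]
    exact funext fun x => mul_self_mul_inv (hits x)
  rw [eq_sub_iff_add_eq', ← diagonal, ← Finset.sum_union (Finset.disjoint_diag_offDiag _),
    Finset.diag_union_offDiag, Finset.univ_product_univ, all_pairs]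

end Outcomes

/-- Exchangeability of the trials under an expectation `E`: permuting them does not change expected
values. The law of the trials is encoded by the functional `E` alone. -/
def IsExchangeable {ι : Type*} (E : ((ι → Bool) → ℝ) →ₗ[ℝ] ℝ) : Prop :=
  ∀ (σ : Equiv.Perm ι) (f : (ι → Bool) → ℝ), E (fun x => f (x ∘ σ)) = E f

namespace IsExchangeable

variable {ι : Type*} [Fintype ι] {E : ((ι → Bool) → ℝ) →ₗ[ℝ] ℝ}

lemma hit_div_hits_apply_perm (hE : IsExchangeable E) (σ : Equiv.Perm ι) (i : ι) :
    E (hit (σ i) / hits) = E (hit i / hits) := by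
  rw [← hE σ (hit i / hits)]
  congr 1
  funext x
  simp [hit, hits_comp_perm]

lemma hit_mul_hit_div_hits_apply_perm (hE : IsExchangeable E) (σ : Equiv.Perm ι) (i j : ι) :
    E (hit (σ i) * hit (σ j) / hits) = E (hit i * hit j / hits) := by
  rw [← hE σ (hit i * hit j / hits)]
  congr 1
  funext x
  simp [hit, hits_comp_perm]

lemma card_mul_hit_div_hits (hE : IsExchangeable E) (i : ι) :
    (Fintype.card ι : ℝ) * E (hit i / hits) = E (hits / hits) := by
  classical
  have same (j : ι) : E (hit j / hits) = E (hit i / hits) := by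
    simpa using hE.hit_div_hits_apply_perm (Equiv.swap i j) i
  rw [← sum_hit_div_hits, map_sum, Fintype.sum_congr _ _ same]
  simp

lemma card_mul_hit_mul_hit_div_hits (hE : IsExchangeable E) {i j : ι} (hij : i ≠ j) :
    (Fintype.card ι : ℝ) * (Fintype.card ι - 1) * E (hit i * hit j / hits) =
      E hits - E (hits / hits) := by
  classical
  have same (q : ι × ι) (hq : q ∈ (Finset.univ : Finset ι).offDiag) :
      E (hit q.1 * hit q.2 / hits) = E (hit i * hit j / hits) := by
    obtain ⟨σ, hi, hj⟩ := MulAction.is_two_pretransitive_iff.1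
      (Equiv.Perm.isMultiplyPretransitive ι 2) hij (Finset.mem_offDiag.1 hq).2.2
    rw [← hi, ← hj]
    exact hE.hit_mul_hit_div_hits_apply_perm σ i j
  rw [← map_sub, ← sum_offDiag_hit_mul_hit_div_hits, map_sum, Finset.sum_congr rfl same,
    Finset.sum_const, Finset.offDiag_card, nsmul_eq_mul, Finset.card_univ,
    Nat.cast_sub (Nat.le_mul_self _)]
  push_cast
  ring

end IsExchangeable

section BernoulliExpectation

variable {ι : Type*} [Fintype ι] [DecidableEq ι] (p : ℝ)

/-- The expectation over independent Bernoulli(`p`) trials indexed by `ι`, a linear functional on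
the functions of the outcome. -/
def bernoulliExpectation : ((ι → Bool) → ℝ) →ₗ[ℝ] ℝ :=
  ∑ x : ι → Bool, (∏ i, bw p (x i)) • LinearMap.proj x

lemma bernoulliExpectation_apply (f : (ι → Bool) → ℝ) :
    bernoulliExpectation p f = ∑ x : ι → Bool, (∏ i, bw p (x i)) * f x := by
  simp [bernoulliExpectation]

lemma isExchangeable_bernoulliExpectation :
    IsExchangeable (bernoulliExpectation p : ((ι → Bool) → ℝ) →ₗ[ℝ] ℝ) := by
  intro σ f
  simp only [bernoulliExpectation_apply]
  refine Fintype.sum_equiv (σ.symm.arrowCongr (Equiv.refl Bool)) _ _ fun x => ?_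
  exact congrArg (· * f (x ∘ σ)) (Equiv.prod_comp σ fun i => bw p (x i)).symm

lemma bernoulliExpectation_prod (f : ι → Bool → ℝ) :
    bernoulliExpectation p (fun x => ∏ i, f i (x i)) =
      ∏ i, (p * f i true + (1 - p) * f i false) := by
  simp only [bernoulliExpectation_apply, ← Finset.prod_mul_distrib]
  rw [← Fintype.prod_sum fun i b => bw p b * f i b]
  simp [bw]

lemma bernoulliExpectation_hit (i : ι) : bernoulliExpectation p (hit i) = p := by
  have hit_eq_prod : hit i = fun x => ∏ j, if j = i then (if x j then 1 else 0) else 1 := by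
    funext x
    simp [hit]
  rw [hit_eq_prod, bernoulliExpectation_prod p fun j b => if j = i then (if b then 1 else 0) else 1,
    Finset.prod_eq_single i (fun j _ hj => by simp [hj]) (by simp)]
  simp

lemma bernoulliExpectation_hits :
    bernoulliExpectation p (hits : (ι → Bool) → ℝ) = Fintype.card ι * p := by
  simp [hits, bernoulliExpectation_hit]

lemma bernoulliExpectation_hits_div_hits :
    bernoulliExpectation p (hits / hits : (ι → Bool) → ℝ) = 1 - (1 - p) ^ Fintype.card ι := by
  have total : bernoulliExpectation p (1 : (ι → Bool) → ℝ) = 1 := by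
    simpa using! bernoulliExpectation_prod p fun (_ : ι) _ => 1
  have no_hits : bernoulliExpectation p (∏ i : ι, (1 - hit i)) = (1 - p) ^ Fintype.card ι := by
    have eq_prod : ∏ i : ι, (1 - hit i) = fun x => ∏ i, (1 - if x i then 1 else 0) := by
      funext x
      simp [hit]
    rw [eq_prod, bernoulliExpectation_prod p fun _ b => 1 - if b then 1 else 0]
    simp
  rw [hits_div_hits, map_sub, total, no_hits]

lemma bernoulliExpectation_snoc {m : ℕ} (f : (Fin (m + 1) → Bool) → ℝ) :
    bernoulliExpectation p f = ∑ b, bw p b *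
      bernoulliExpectation p fun y : Fin m → Bool => f (Fin.snoc (α := fun _ => Bool) y b) := by
  simp only [bernoulliExpectation_apply, Finset.mul_sum]
  rw [← Equiv.sum_comp (Fin.snocEquiv fun _ => Bool), Fintype.sum_prod_type]
  refine Fintype.sum_congr _ _ fun b => Fintype.sum_congr _ _ fun y => ?_
  simp only [Fin.snocEquiv, Equiv.coe_fn_mk, Fin.prod_univ_castSucc, Fin.snoc_castSucc,
    Fin.snoc_last]
  ring

end BernoulliExpectation

section HotHand

variable {m : ℕ}

lemma bval_eq_hit (x : Fin m → Bool) (j : Fin m) : bval x j = hit j x := by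
  simp [bval, hit]

lemma hit_castSucc_snoc (y : Fin m → Bool) (b : Bool) (j : Fin m) :
    hit j.castSucc (Fin.snoc (α := fun _ => Bool) y b) = hit j y := by
  simp [hit]

lemma sum_bval_snoc (y : Fin m → Bool) (b : Bool) :
    ∑ j ∈ Finset.range m, bval (Fin.snoc (α := fun _ => Bool) y b : Fin (m + 1) → Bool) j =
      hits y := by
  simp only [Finset.sum_range, hits, Finset.sum_apply, ← hit_castSucc_snoc y b, ← bval_eq_hit,
    Fin.val_castSucc]

lemma sum_bval_mul_bval_snoc (y : Fin (m + 1) → Bool) (b : Bool) :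
    ∑ j ∈ Finset.range (m + 1),
        bval (Fin.snoc (α := fun _ => Bool) y b : Fin (m + 2) → Bool) j *
          bval (Fin.snoc (α := fun _ => Bool) y b : Fin (m + 2) → Bool) (j + 1) =
      ∑ j : Fin m, hit j.castSucc y * hit j.succ y +
        hit (Fin.last m) y * if b then 1 else 0 := by
  set x : Fin (m + 2) → Bool := Fin.snoc (α := fun _ => Bool) y b with hx
  have consecutive (j : Fin (m + 1)) : bval x j * bval x (j + 1) = hit j y * hit j.succ x := by
    rw [← hit_castSucc_snoc y b, ← bval_eq_hit, ← bval_eq_hit, Fin.val_succ, Fin.val_castSucc]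
  have last_hit : hit (Fin.last m).succ x = if b then 1 else 0 := by
    simp [hit, hx]
  rw [Finset.sum_range, Fintype.sum_congr _ _ consecutive, Fin.sum_univ_castSucc, last_hit]
  simp only [Fin.succ_castSucc, hx, hit_castSucc_snoc]

/-- The hot hand statistic `P̂₁ = (X₁ X₂ + ⋯ + Xₙ₋₁ Xₙ) / D₁` of streak length `1`, with
`D₁ = X₁ + ⋯ + Xₙ₋₁`. As `x / 0 = 0`, it vanishes where `D₁ = 0`, so that its expectation is already
restricted to the event `D₁ ≠ 0`. -/
noncomputable def hotHand {n : ℕ} (x : Fin n → Bool) : ℝ :=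
  (∑ j ∈ Finset.range (n - 1), bval x j * bval x (j + 1)) / ∑ j ∈ Finset.range (n - 1), bval x j

lemma hotHand_snoc (y : Fin (m + 1) → Bool) (b : Bool) :
    hotHand (Fin.snoc (α := fun _ => Bool) y b : Fin (m + 2) → Bool) =
      ∑ j : Fin m, hit j.castSucc y * hit j.succ y / hits y +
        (if b then 1 else 0) * (hit (Fin.last m) y / hits y) := by
  simp only [hotHand, Nat.add_succ_sub_one, sum_bval_snoc, sum_bval_mul_bval_snoc, add_div,
    Finset.sum_div]
  ring

variable (m) (p : ℝ)

lemma bernoulliExpectation_sum_bval_ne_zero :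
    bernoulliExpectation p (fun x : Fin (m + 1) → Bool =>
      if ∑ j ∈ Finset.range m, bval x j ≠ 0 then 1 else 0) = 1 - (1 - p) ^ m := by
  have indicator : (fun y : Fin m → Bool => if hits y ≠ 0 then (1 : ℝ) else 0) = hits / hits := by
    funext y
    by_cases hy : hits y = 0 <;> simp [hy]
  rw [bernoulliExpectation_snoc]
  simp only [sum_bval_snoc, indicator, bernoulliExpectation_hits_div_hits, Fintype.card_fin,
    Fintype.sum_bool, bw, if_true, Bool.false_eq_true, if_false]
  ring

lemma bernoulliExpectation_hotHand_eq_add :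
    bernoulliExpectation p (hotHand : (Fin (m + 2) → Bool) → ℝ) =
      ∑ j : Fin m, bernoulliExpectation p (hit j.castSucc * hit j.succ / hits) +
        p * bernoulliExpectation p (hit (Fin.last m) / hits) := by
  have split_last (b : Bool) :
      (fun y : Fin (m + 1) → Bool => hotHand (Fin.snoc (α := fun _ => Bool) y b)) =
        ∑ j : Fin m, hit j.castSucc * hit j.succ / hits +
          (if b then (1 : ℝ) else 0) • (hit (Fin.last m) / hits) := by
    funext y
    simp only [hotHand_snoc, Pi.add_apply, Finset.sum_apply, Pi.div_apply, Pi.mul_apply,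
      Pi.smul_apply, smul_eq_mul]
  rw [bernoulliExpectation_snoc]
  simp only [split_last, map_add, map_sum, map_smul, Fintype.sum_bool, bw, if_true,
    Bool.false_eq_true, if_false, smul_eq_mul]
  ring

lemma bernoulliExpectation_hotHand :
    bernoulliExpectation p (hotHand : (Fin (m + 3) → Bool) → ℝ) =
      p + (p - 1) / (m + 2) * (1 - (1 - p) ^ (m + 2)) := by
  have exchangeable := isExchangeable_bernoulliExpectation (ι := Fin (m + 2)) p
  have single := exchangeable.card_mul_hit_div_hits (Fin.last (m + 1))
  have pair (j : Fin (m + 1)) :=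
    exchangeable.card_mul_hit_mul_hit_div_hits (Fin.castSucc_lt_succ (i := j)).ne
  have sum_pair := Fintype.sum_congr _ _ pair
  simp only [bernoulliExpectation_hits, bernoulliExpectation_hits_div_hits, Fintype.card_fin,
    ← Finset.mul_sum, Finset.sum_const, Finset.card_univ, nsmul_eq_mul] at single sum_pair
  rw [bernoulliExpectation_hotHand_eq_add]
  push_cast at single sum_pair
  have hm : (m : ℝ) + 1 ≠ 0 := by positivity
  field_simp
  refine mul_left_cancel₀ hm ?_
  linear_combination sum_pair + (m + 1) * p * single

end HotHand

/-- Expected hot hand statistic of streak length 1 for `n` i.i.d. Bernoulli(p) variables: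
`E[P̂₁(X) | D₁(X) ≠ 0] = p/(1-(1-p)^(n-1)) + (p-1)/(n-1)`.  Expectations are written
as sums over all outcomes `x : Fin n → Bool` weighted by the product Bernoulli mass. -/
theorem hot_hand_expectation (n : ℕ) (hn : 3 ≤ n) (p : ℝ) (hp0 : 0 < p) (hp1 : p < 1) :
    (∑ x : Fin n → Bool, (∏ i, bw p (x i)) *
        (if (∑ j ∈ Finset.range (n - 1), bval x j) ≠ 0 then
          (∑ j ∈ Finset.range (n - 1), bval x j * bval x (j + 1)) /
            (∑ j ∈ Finset.range (n - 1), bval x j)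
        else 0)) /
      (∑ x : Fin n → Bool, (∏ i, bw p (x i)) *
        (if (∑ j ∈ Finset.range (n - 1), bval x j) ≠ 0 then 1 else 0))
      = p / (1 - (1 - p) ^ (n - 1)) + (p - 1) / (n - 1) := by
  obtain ⟨m, rfl⟩ := Nat.exists_eq_add_of_le' hn
  have statistic (x : Fin (m + 3) → Bool) :
      (if ∑ j ∈ Finset.range (m + 2), bval x j ≠ 0 then
        (∑ j ∈ Finset.range (m + 2), bval x j * bval x (j + 1)) /
          ∑ j ∈ Finset.range (m + 2), bval x j
      else 0) = hotHand x := by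
    simp +contextual [hotHand]
  have prob_ne_zero : 1 - (1 - p) ^ (m + 2) ≠ 0 :=
    (sub_pos.2 (pow_lt_one₀ (by linarith) (by linarith) (by lia))).ne'
  simp only [Nat.add_succ_sub_one, statistic]
  rw [← bernoulliExpectation_apply, ← bernoulliExpectation_apply, bernoulliExpectation_hotHand,
    bernoulliExpectation_sum_bval_ne_zero, add_div, mul_div_cancel_right₀ _ prob_ne_zero]
  push_cast
  ring
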